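/- arXiv:2310.10212 — 3 statements merged into one kernel-verified Lean document; each statement's English description precedes it below -/
import Mathlib

section
/- Let φ: ℙⁿ → ℙⁿ⁺¹ be the embedding sending (a₀ : … : aₙ) to (a₀ : … : aₙ : 0), let P ∈ ℙⁿ with defining homogeneous prime ideal ℘ ⊂ K[X₀,…,Xₙ], let 𝔮 ⊂ K[X₀,…,Xₙ₊₁] be the defining homogeneous prime ideal of φ(P), and let r be a positive integer. Then ℘ʳ = 𝔮ʳ ∩ K[X₀,…,Xₙ], where K[X₀,…,Xₙ] is viewed as a subring of K[X₀,…,Xₙ₊₁]. -/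
open MvPolynomial

/-- The defining homogeneous prime ideal in `K[X₀,…,X_{N-1}]` of the point of projective
space with homogeneous coordinate vector `a : Fin N → K`: it is generated by the linear
forms vanishing at `a`. -/
noncomputable def pointIdeal {K : Type} [Field K] {N : ℕ} (a : Fin N → K) :
    Ideal (MvPolynomial (Fin N) K) :=
  Ideal.span {l : MvPolynomial (Fin N) K |
    MvPolynomial.IsHomogeneous l 1 ∧ MvPolynomial.eval a l = 0}

/-- Homogeneous coordinates of the image of the point `a ∈ ℙⁿ` under the embedding
`φ_{n,m} : ℙⁿ → ℙᵐ`, `(a₀ : ⋯ : aₙ) ↦ (a₀ : ⋯ : aₙ : 0 : ⋯ : 0)`. -/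
def extendPoint {K : Type} [Field K] {n : ℕ} (m : ℕ) (a : Fin (n + 1) → K) :
    Fin (m + 1) → K :=
  fun i => if h : (i : ℕ) < n + 1 then a ⟨i, h⟩ else 0

/-- The substitution `X_{n+1} = ⋯ = X_m = 0`, as a `K`-algebra map
`K[X₀,…,X_m] → K[X₀,…,X_n]`. -/
noncomputable def setTailZero (K : Type) [Field K] (n m : ℕ) :
    MvPolynomial (Fin (m + 1)) K →ₐ[K] MvPolynomial (Fin (n + 1)) K :=
  MvPolynomial.aeval fun i : Fin (m + 1) =>
    if h : (i : ℕ) < n + 1 then MvPolynomial.X (⟨i, h⟩ : Fin (n + 1)) else 0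

/-- The inclusion `K[X₀,…,X_n] ⊆ K[X₀,…,X_m]` (as a ring map). -/
noncomputable def polyIncl (K : Type) [Field K] {n m : ℕ} (h : n ≤ m) :
    MvPolynomial (Fin (n + 1)) K →ₐ[K] MvPolynomial (Fin (m + 1)) K :=
  MvPolynomial.rename (Fin.castLE (Nat.succ_le_succ h))

/-- The degree-`t` homogeneous part `[I]_t` of an ideal, as a `K`-subspace. -/
noncomputable def degPart {K : Type} [Field K] {N : ℕ}
    (I : Ideal (MvPolynomial (Fin N) K)) (t : ℕ) :
    Submodule K (MvPolynomial (Fin N) K) :=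
  Submodule.restrictScalars K I ⊓ MvPolynomial.homogeneousSubmodule (Fin N) K t

/-- The Hilbert function `H_{R/I}(t) = dim_K (R/I)_t` of the quotient by a homogeneous
ideal `I`, computed as the dimension of the image of the degree-`t` part of `R` in `R/I`. -/
noncomputable def hilb {K : Type} [Field K] {N : ℕ}
    (I : Ideal (MvPolynomial (Fin N) K)) (t : ℕ) : ℕ :=
  Module.finrank K ((MvPolynomial.homogeneousSubmodule (Fin N) K t).map
    (Ideal.Quotient.mkₐ K I).toLinearMap)

/-- The regularity index of `R/I`: the least `t` from which the Hilbert function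
`H_{R/I}` is constant. -/
noncomputable def regIndex {K : Type} [Field K] {N : ℕ}
    (I : Ideal (MvPolynomial (Fin N) K)) : ℕ :=
  sInf {t : ℕ | ∀ t', t ≤ t' → hilb I t' = hilb I t}

theorem setTailZero_polyIncl (K : Type) [Field K] {n m : ℕ} (h : n ≤ m)
    (f : MvPolynomial (Fin (n + 1)) K) : setTailZero K n m (polyIncl K h f) = f := by
  have : (setTailZero K n m).comp (polyIncl K h) = AlgHom.id K _ := by
    ext i : 1
    simp [setTailZero, polyIncl]
    intro h; omega
  exact DFunLike.congr_fun this f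

theorem eval_setTailZero {K : Type} [Field K] {n : ℕ} (m : ℕ) (a : Fin (n + 1) → K)
    (f : MvPolynomial (Fin (m + 1)) K) :
    eval a (setTailZero K n m f) = eval (extendPoint m a) f := by
  have : (aeval a).comp (setTailZero K n m) = aeval (R := K) (extendPoint m a) := by
    ext i : 1
    by_cases hi : (i : ℕ) < n + 1 <;> simp [setTailZero, extendPoint, hi, -Order.lt_add_one_iff]
  simpa [aeval_eq_eval] using DFunLike.congr_fun this f

theorem map_setTailZero_le {K : Type} [Field K] {n : ℕ} (m : ℕ) (a : Fin (n + 1) → K) :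
    (pointIdeal (extendPoint m a)).map (setTailZero K n m) ≤ pointIdeal a := by
  rw [pointIdeal, Ideal.map_span, Ideal.span_le]
  rintro _ ⟨l, ⟨hl, h0⟩, rfl⟩
  refine Ideal.subset_span ⟨?_, ?_⟩
  · have := hl.aeval (n := 1) (fun i : Fin (m + 1) =>
      if h : (i : ℕ) < n + 1 then (X (⟨i, h⟩ : Fin (n + 1)) : MvPolynomial _ K) else 0) (by
        intro i
        split_ifs
        · exact isHomogeneous_X _ _
        · exact isHomogeneous_zero _ _ _)
    simpa [setTailZero] using this
  · exact (eval_setTailZero m a l).trans h0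

theorem map_polyIncl_le {K : Type} [Field K] {n m : ℕ} (h : n ≤ m) (a : Fin (n + 1) → K) :
    (pointIdeal a).map (polyIncl K h) ≤ pointIdeal (extendPoint m a) := by
  rw [pointIdeal, Ideal.map_span, Ideal.span_le]
  rintro _ ⟨l, ⟨hl, h0⟩, rfl⟩
  refine Ideal.subset_span ⟨hl.rename_isHomogeneous, ?_⟩
  have := eval_setTailZero m a (polyIncl K h l)
  rw [setTailZero_polyIncl] at this
  exact this.symm.trans h0

theorem stmt1 (K : Type) [Field K] [IsAlgClosed K] (n : ℕ)
    (a : Fin (n + 1) → K) (ha : a ≠ 0) (r : ℕ) (hr : 0 < r) :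
    pointIdeal a ^ r =
      Ideal.comap (polyIncl K (Nat.le_succ n)) (pointIdeal (extendPoint (n + 1) a) ^ r) := by
  apply le_antisymm
  · rw [← Ideal.map_le_iff_le_comap, Ideal.map_pow]
    exact Ideal.pow_right_mono (map_polyIncl_le _ a) r
  · intro f hf
    have h1 := Ideal.mem_map_of_mem (setTailZero K n (n + 1)) (Ideal.mem_comap.1 hf)
    rw [setTailZero_polyIncl, Ideal.map_pow] at h1
    exact Ideal.pow_right_mono (map_setTailZero_le _ a) r h1
end

section
/- Let m > n be positive integers, Z = m₁P₁ + ⋯ + mₛPₛ be fat points in ℙⁿ, and φ_{n,m}: ℙⁿ → ℙᵐ be the embedding appending m−n zero coordinates. If 0 ≤ i ≤ t < reg(Rₙ/I_Z), g is a degree-i element of ℘₁^{m₁+i−t} ∩ ⋯ ∩ ℘ₛ^{mₛ+i−t} (with the convention ℘ʳ = Rₙ when r ≤ 0), and h_{t−i} is a degree-(t−i) element of K[Xₙ₊₁,…,Xₘ], then g·h_{t−i} ∈ [I_{φ_{n,m}(Z)}]_t. -/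
open MvPolynomial

theorem polyIncl_mem_pow {K : Type} [Field K] {n m : ℕ} (h : n ≤ m) (a : Fin (n + 1) → K)
    (r : ℕ) {g : MvPolynomial (Fin (n + 1)) K} (hg : g ∈ pointIdeal a ^ r) :
    polyIncl K h g ∈ pointIdeal (extendPoint m a) ^ r := by
  have h1 : (pointIdeal a).map (polyIncl K h) ≤ pointIdeal (extendPoint m a) := by
    unfold pointIdeal
    rw [Ideal.map_span, Ideal.span_le]
    rintro _ ⟨l, ⟨hl, hl0⟩, rfl⟩
    apply Ideal.subset_span
    refine ⟨hl.rename_isHomogeneous, ?_⟩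
    show eval _ (rename _ l) = 0
    rw [eval_rename]
    have : extendPoint m a ∘ Fin.castLE (Nat.succ_le_succ h) = a := by
      funext k
      have hk : (k : ℕ) < n + 1 := k.2
      simp [extendPoint]
      omega
    rw [this]
    exact hl0
  have h2 := Ideal.mem_map_of_mem (polyIncl K h) hg
  rw [Ideal.map_pow] at h2
  exact Ideal.pow_right_mono h1 r h2

theorem tail_mem_pow {K : Type} [Field K] {n m : ℕ} (a : Fin (n + 1) → K)
    (d : ℕ) (q : MvPolynomial (Fin (m + 1)) K)
    (hq : q ∈ MvPolynomial.supported K {k : Fin (m + 1) | n + 1 ≤ (k : ℕ)})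
    (hqh : q.IsHomogeneous d) :
    q ∈ pointIdeal (extendPoint m a) ^ d := by
  rw [q.as_sum]
  refine Ideal.sum_mem _ fun v hv => ?_
  have hdeg : v.degree = d := by
    have := hqh (mem_support_iff.1 hv)
    rw [← this]
    exact DFunLike.congr_fun Finsupp.degree_eq_weight_one v
  rw [monomial_eq]
  apply Ideal.mul_mem_left
  rw [← hdeg, Finsupp.degree, Finsupp.prod]
  show _ ∈ pointIdeal (extendPoint m a) ^ (∑ k ∈ v.support, v k)
  rw [← Finset.prod_pow_eq_pow_sum]
  refine Ideal.prod_mem_prod fun k hk => Ideal.pow_mem_pow ?_ _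
  apply Ideal.subset_span
  refine ⟨isHomogeneous_X K k, ?_⟩
  have hk' : n + 1 ≤ (k : ℕ) := mem_supported.1 hq (mem_vars k |>.2 ⟨v, hv, hk⟩)
  rw [eval_X, extendPoint, dif_neg (by omega)]

theorem stmt13 (K : Type) [Field K] [IsAlgClosed K] (n m s : ℕ) (hnm : n < m) (hs : 0 < s)
    (p : Fin s → Fin (n + 1) → K) (hp : ∀ i, p i ≠ 0)
    (hdist : ∀ i j : Fin s, i ≠ j → ∀ c : K, p i ≠ c • p j)
    (mu : Fin s → ℕ) (hmu : ∀ i, 0 < mu i)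
    (i t : ℕ) (hit : i ≤ t) (ht : t < regIndex (⨅ j, pointIdeal (p j) ^ mu j))
    (g : MvPolynomial (Fin (n + 1)) K)
    (hg : g ∈ ⨅ j, pointIdeal (p j) ^ (mu j + i - t)) (hgh : g.IsHomogeneous i)
    (q : MvPolynomial (Fin (m + 1)) K)
    (hq : q ∈ MvPolynomial.supported K {k : Fin (m + 1) | n + 1 ≤ (k : ℕ)})
    (hqh : q.IsHomogeneous (t - i)) :
    polyIncl K hnm.le g * q ∈ degPart (⨅ j, pointIdeal (extendPoint m (p j)) ^ mu j) t := by
  refine ⟨?_, ?_⟩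
  · show _ ∈ (⨅ j, pointIdeal (extendPoint m (p j)) ^ mu j)
    rw [Ideal.mem_iInf] at hg ⊢
    intro j
    have h1 := polyIncl_mem_pow hnm.le (p j) _ (hg j)
    have h2 := tail_mem_pow (p j) _ q hq hqh
    have h3 := Ideal.mul_mem_mul h1 h2
    rw [← pow_add] at h3
    exact Ideal.pow_le_pow_right (by omega) h3
  · have h : (polyIncl K hnm.le g).IsHomogeneous i := hgh.rename_isHomogeneous
    have h' := h.mul hqh
    rw [Nat.add_sub_cancel' hit] at h'
    exact h'
end

section
/- Let m > n be positive integers, Z = m₁P₁ + ⋯ + mₛPₛ be fat points in ℙⁿ, and φ_{n,m}: ℙⁿ → ℙᵐ be the embedding appending m−n zero coordinates. If there exists an index j with m_j ≥ 2, then for every t ≥ 1, H_{Rₘ/I_{φ_{n,m}(Z)}}(t) > H_{Rₙ/I_Z}(t). -/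
open MvPolynomial

theorem aux_eval_of_mem {K : Type} [Field K] {N : ℕ} (a : Fin N → K)
    {f : MvPolynomial (Fin N) K} (hf : f ∈ pointIdeal a) : MvPolynomial.eval a f = 0 := by
  have h : pointIdeal a ≤ RingHom.ker (MvPolynomial.eval a) := by
    refine Ideal.span_le.2 ?_
    rintro l ⟨_, hl⟩
    exact hl
  exact h hf

theorem aux_pderiv_of_mem {K : Type} [Field K] {N : ℕ} (a : Fin N → K) (k : Fin N)
    {f : MvPolynomial (Fin N) K} (hf : f ∈ pointIdeal a ^ 2) :
    MvPolynomial.eval a (MvPolynomial.pderiv k f) = 0 := by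
  rw [pow_two] at hf
  refine Submodule.mul_induction_on hf ?_ ?_
  · intro x hx y hy
    simp [Derivation.leibniz, aux_eval_of_mem a hx, aux_eval_of_mem a hy]
  · intro x y hx hy
    simp [hx, hy]

theorem aux_tail_isHomogeneous {K : Type} [Field K] {n m t : ℕ}
    {f : MvPolynomial (Fin (m + 1)) K} (hf : f.IsHomogeneous t) :
    (setTailZero K n m f).IsHomogeneous t := by
  have := hf.aeval (n := 1) (fun i : Fin (m + 1) =>
    if h : (i : ℕ) < n + 1 then (MvPolynomial.X (⟨i, h⟩ : Fin (n + 1)) :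
      MvPolynomial (Fin (n + 1)) K) else 0) (by
        intro i
        split_ifs
        · exact isHomogeneous_X _ _
        · exact isHomogeneous_zero _ _ _)
  simpa [setTailZero] using this

theorem aux_eval_tail {K : Type} [Field K] {n m : ℕ} (a : Fin (n + 1) → K)
    (f : MvPolynomial (Fin (m + 1)) K) :
    MvPolynomial.eval a (setTailZero K n m f) = MvPolynomial.eval (extendPoint m a) f := by
  induction f using MvPolynomial.induction_on with
  | C c => simp [setTailZero]
  | add p q hp hq => simp [hp, hq]
  | mul_X p i hp =>
    rw [map_mul, map_mul, map_mul, hp]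
    congr 1
    simp only [setTailZero, aeval_X, extendPoint, eval_X]
    split_ifs <;> simp

theorem aux_map_le {K : Type} [Field K] {n : ℕ} (m : ℕ) (a : Fin (n + 1) → K) (k : ℕ) :
    pointIdeal (extendPoint m a) ^ k ≤ (pointIdeal a ^ k).comap (setTailZero K n m) := by
  rw [← Ideal.map_le_iff_le_comap, Ideal.map_pow]
  refine Ideal.pow_right_mono ?_ k
  rw [Ideal.map_le_iff_le_comap]
  refine Ideal.span_le.2 ?_
  rintro l ⟨h1, h2⟩
  exact Ideal.subset_span ⟨aux_tail_isHomogeneous h1, by rw [aux_eval_tail, h2]⟩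

theorem aux_tail_incl {K : Type} [Field K] {n m : ℕ} (h : n ≤ m)
    (f : MvPolynomial (Fin (n + 1)) K) : setTailZero K n m (polyIncl K h f) = f := by
  simp only [setTailZero, polyIncl, aeval_rename]
  have : ((fun i : Fin (m + 1) =>
    if h : (i : ℕ) < n + 1 then (MvPolynomial.X (⟨i, h⟩ : Fin (n + 1)) :
      MvPolynomial (Fin (n + 1)) K) else 0) ∘ Fin.castLE (Nat.succ_le_succ h)) = X := by
    funext i
    have hi : (i : ℕ) < n + 1 := i.2
    simp only [Function.comp_apply, Fin.val_castLE, hi, dif_pos]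
  rw [this]
  simp

theorem aux_finite (K : Type) [Field K] (N t : ℕ) :
    Module.Finite K (MvPolynomial.homogeneousSubmodule (Fin N) K t) := by
  exact Module.Finite.iff_fg.2 (homogeneousSubmodule_fg (σ := Fin N) (R := K) t)

theorem stmt18 (K : Type) [Field K] [IsAlgClosed K] (n m s : ℕ) (hnm : n < m) (hs : 0 < s)
    (p : Fin s → Fin (n + 1) → K) (hp : ∀ i, p i ≠ 0)
    (hdist : ∀ i j : Fin s, i ≠ j → ∀ c : K, p i ≠ c • p j)
    (mu : Fin s → ℕ) (hmu : ∀ i, 0 < mu i)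
    (hj : ∃ j, 2 ≤ mu j) :
    ∀ t : ℕ, 1 ≤ t → hilb (⨅ i, pointIdeal (p i) ^ mu i) t <
      hilb (⨅ i, pointIdeal (extendPoint m (p i)) ^ mu i) t := by
  intro t ht
  obtain ⟨j, hj⟩ := hj
  set I := ⨅ i, pointIdeal (p i) ^ mu i with hI
  set J := ⨅ i, pointIdeal (extendPoint m (p i)) ^ mu i with hJ
  have hle : J ≤ I.comap (setTailZero K n m) := by
    intro f hf
    rw [Ideal.mem_comap, hI, Ideal.mem_iInf]
    intro i
    rw [hJ, Ideal.mem_iInf] at hf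
    exact aux_map_le m (p i) (mu i) (hf i)
  let Φ : (MvPolynomial (Fin (m + 1)) K ⧸ J) →ₐ[K] (MvPolynomial (Fin (n + 1)) K ⧸ I) :=
    Ideal.quotientMapₐ I (setTailZero K n m) hle
  have hΦ : ∀ f, Φ (Ideal.Quotient.mk J f) = Ideal.Quotient.mk I (setTailZero K n m f) :=
    fun f => rfl
  unfold hilb
  set B := (homogeneousSubmodule (Fin (m + 1)) K t).map
    (Ideal.Quotient.mkₐ K J).toLinearMap with hB
  have hA : (homogeneousSubmodule (Fin (n + 1)) K t).map
      (Ideal.Quotient.mkₐ K I).toLinearMap = LinearMap.range (Φ.toLinearMap.domRestrict B) := by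
    ext x
    constructor
    · rintro ⟨f, hf, rfl⟩
      refine ⟨⟨Ideal.Quotient.mk J (polyIncl K hnm.le f),
        polyIncl K hnm.le f, ?_, rfl⟩, ?_⟩
      · exact IsHomogeneous.rename_isHomogeneous hf
      · change Φ (Ideal.Quotient.mk J (polyIncl K hnm.le f)) = Ideal.Quotient.mk I f
        rw [hΦ, aux_tail_incl]
    · rintro ⟨⟨_, f, hf, rfl⟩, rfl⟩
      exact ⟨setTailZero K n m f, aux_tail_isHomogeneous hf, rfl⟩
  have : Module.Finite K (homogeneousSubmodule (Fin (m + 1)) K t) := aux_finite K _ t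
  have : Module.Finite K B := by rw [hB]; infer_instance
  have hrn := LinearMap.finrank_range_add_finrank_ker (Φ.toLinearMap.domRestrict B)
  rw [hA, ← hrn]
  refine Nat.lt_add_of_pos_right ?_
  obtain ⟨k, hk⟩ := Function.ne_iff.1 (hp j)
  let k' : Fin (m + 1) := Fin.castLE (Nat.succ_le_succ hnm.le) k
  have hkl : Fin.last m ≠ k' := by
    intro h
    have := congrArg Fin.val h
    simp [k'] at this
    omega
  let f : MvPolynomial (Fin (m + 1)) K := X k' ^ (t - 1) * X (Fin.last m)
  have hf : f.IsHomogeneous t := by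
    have := ((isHomogeneous_X K k').pow (t - 1)).mul (isHomogeneous_X K (Fin.last m))
    rwa [one_mul, Nat.sub_add_cancel ht] at this
  have hf0 : setTailZero K n m f = 0 := by
    have : ¬ (m < n + 1) := by omega
    rw [show setTailZero K n m f = setTailZero K n m (X k' ^ (t - 1)) *
      setTailZero K n m (X (Fin.last m)) from map_mul _ _ _]
    have h0 : setTailZero K n m (X (Fin.last m)) = 0 := by
      simp only [setTailZero, aeval_X, Fin.val_last, this, dif_neg, not_false_eq_true]
    rw [h0, mul_zero]
  have hfJ : f ∉ J := by
    intro h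
    rw [hJ, Ideal.mem_iInf] at h
    have h2 := aux_pderiv_of_mem (extendPoint m (p j)) (Fin.last m)
      (Ideal.pow_le_pow_right hj (h j))
    have h3 : extendPoint m (p j) k' = p j k := by
      have hi : (k : ℕ) < n + 1 := k.2
      simp only [extendPoint, k', Fin.val_castLE, hi, dif_pos]
    simp [f, Derivation.leibniz, Derivation.leibniz_pow, pderiv_X_of_ne hkl.symm, h3] at h2
    exact hk h2.1
  have : Nontrivial (LinearMap.ker (Φ.toLinearMap.domRestrict B)) := by
    refine ⟨⟨⟨⟨Ideal.Quotient.mk J f, f, hf, rfl⟩, ?_⟩, 0, ?_⟩⟩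
    · change Φ (Ideal.Quotient.mk J f) = 0
      rw [hΦ, hf0, map_zero]
    · intro h
      apply hfJ
      rw [← Ideal.Quotient.eq_zero_iff_mem]
      exact congrArg (fun x => (x.1.1 : MvPolynomial (Fin (m + 1)) K ⧸ J)) h
  exact Module.finrank_pos (R := K) (M := LinearMap.ker (Φ.toLinearMap.domRestrict B))
end
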